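/- (Dyadic Littlewood–Paley inequality on the unit square) Let p ∈ (1,∞). There exist constants 0 < c_p ≤ C_p < ∞ such that for every f ∈ L_p([0,1)^2), c_p ‖f‖_{L_p} ≤ ‖S(f)‖_{L_p} ≤ C_p ‖f‖_{L_p}, where S(f) = (Σ_{j ∈ ℕ_{−1}^2} Σ_{m ∈ D_j} 2^{2|j|} ⟨f, h_{j,m}⟩² 1_{I_{j,m}})^{1/2} is the dyadic square function of f. -/

import Mathlib

open MeasureTheory

/-- The real value of a binary digit. -/
noncomputable def bval (b : Bool) : ℝ := if b then 1 else 0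

/-- The two-dimensional digit shifted Hammersley point set with `2^n` points,
indexed by the digit vectors `t : Fin n → Bool`.  The index `i : Fin n`
corresponds to the digit `t_{i+1}` of the paper. -/
noncomputable def hammersleyShifted (n : ℕ) (σ : Fin n → Bool) (t : Fin n → Bool) : ℝ × ℝ :=
  (∑ i : Fin n, bval (t i) / 2 ^ (n - i.val),
   ∑ i : Fin n, bval (t i != σ i) / 2 ^ (i.val + 1))

/-- Number of points of the (indexed) point set `P` lying in `[0,t₁) × [0,t₂)`. -/
noncomputable def countIn {ι : Type*} [Fintype ι] (P : ι → ℝ × ℝ) (t : ℝ × ℝ) : ℕ :=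
  (Finset.univ.filter
    (fun k => 0 ≤ (P k).1 ∧ (P k).1 < t.1 ∧ 0 ≤ (P k).2 ∧ (P k).2 < t.2)).card

/-- The local discrepancy `D_N(P,t) = A_N([0,t),P)/N - t₁t₂` of an indexed point set. -/
noncomputable def localDisc {ι : Type*} [Fintype ι] (P : ι → ℝ × ℝ) (t : ℝ × ℝ) : ℝ :=
  (countIn P t : ℝ) / (Fintype.card ι) - t.1 * t.2

/-- The `L_p`-discrepancy of an indexed point set. -/
noncomputable def LpDisc (p : ℝ) {ι : Type*} [Fintype ι] (P : ι → ℝ × ℝ) : ℝ :=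
  (∫ t in Set.Icc (0 : ℝ × ℝ) 1, |localDisc P t| ^ p) ^ (1 / p)

/-- One-dimensional `L∞`-normalized Haar function `h_{j,m}`, with `j ∈ ℤ`, `j = -1`
giving the indicator of `[0,1)` and `j ≥ 0` the usual Haar function on `I_{j,m}`. -/
noncomputable def haar1 (j : ℤ) (m : ℕ) (x : ℝ) : ℝ :=
  if j = -1 then (if 0 ≤ x ∧ x < 1 then 1 else 0)
  else if (2 * m : ℝ) / 2 ^ (j.toNat + 1) ≤ x ∧ x < (2 * m + 1 : ℝ) / 2 ^ (j.toNat + 1) then 1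
  else if (2 * m + 1 : ℝ) / 2 ^ (j.toNat + 1) ≤ x ∧ x < (2 * m + 2 : ℝ) / 2 ^ (j.toNat + 1) then -1
  else 0

/-- Two-dimensional (tensor product) Haar function. -/
noncomputable def haar2 (j : ℤ × ℤ) (m : ℕ × ℕ) (x : ℝ × ℝ) : ℝ :=
  haar1 j.1 m.1 x.1 * haar1 j.2 m.2 x.2

/-- One-dimensional dyadic interval `I_{j,m}` (with `I_{-1,0} = [0,1)`). -/
noncomputable def dyadicI (j : ℤ) (m : ℕ) : Set ℝ :=
  if j = -1 then Set.Ico (0 : ℝ) 1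
  else Set.Ico ((m : ℝ) / 2 ^ j.toNat) ((m + 1 : ℝ) / 2 ^ j.toNat)

/-- Haar coefficient `μ_{j,m} = ∫_{[0,1]²} D_N(P,t) h_{j,m}(t) dt` of the local
discrepancy of an indexed point set. -/
noncomputable def haarCoeff {ι : Type*} [Fintype ι] (P : ι → ℝ × ℝ) (j : ℤ × ℤ) (m : ℕ × ℕ) : ℝ :=
  ∫ t in Set.Icc (0 : ℝ × ℝ) 1, localDisc P t * haar2 j m t

/-- Number of zero components of the shift `σ`. -/
noncomputable def zeroCount {n : ℕ} (σ : Fin n → Bool) : ℕ :=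
  (Finset.univ.filter (fun j => σ j = false)).card

/-- The symmetrized digit shifted Hammersley point set `R_{n,σ} ∪ R_{n,σ⊕1}`
with `2^(n+1)` points, indexed by `Bool × (Fin n → Bool)`. -/
noncomputable def hammersleySym (n : ℕ) (σ : Fin n → Bool) :
    Bool × (Fin n → Bool) → ℝ × ℝ :=
  fun bt => if bt.1 then hammersleyShifted n (fun i => !(σ i)) bt.2
            else hammersleyShifted n σ bt.2

/-- The multiset `R_{n,σ} ∪ {(x, 1-y) : (x,y) ∈ R_{n,σ}}` with `2^(n+1)` points
(counted with multiplicity), indexed by `Bool × (Fin n → Bool)`. -/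
noncomputable def hammersleySymTilde (n : ℕ) (σ : Fin n → Bool) :
    Bool × (Fin n → Bool) → ℝ × ℝ :=
  fun bt => if bt.1 then ((hammersleyShifted n σ bt.2).1, 1 - (hammersleyShifted n σ bt.2).2)
            else hammersleyShifted n σ bt.2

/-- The dyadic square function `S(f)` on the unit square: indices `k ∈ ℕ²` encode
`j = (k₁ - 1, k₂ - 1) ∈ ℕ_{-1}²`, and for each `j` the inner sum runs over `m ∈ D_j`. -/
noncomputable def sqFn (f : ℝ × ℝ → ℝ) (x : ℝ × ℝ) : ℝ :=
  Real.sqrt (∑' k : ℕ × ℕ,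
    ∑ m1 ∈ Finset.range (2 ^ ((k.1 : ℤ) - 1).toNat),
      ∑ m2 ∈ Finset.range (2 ^ ((k.2 : ℤ) - 1).toNat),
        2 ^ (2 * (((k.1 : ℤ) - 1).toNat + ((k.2 : ℤ) - 1).toNat)) *
          (∫ t in Set.Icc (0 : ℝ × ℝ) 1,
              f t * haar2 ((k.1 : ℤ) - 1, (k.2 : ℤ) - 1) (m1, m2) t) ^ 2 *
          Set.indicator (dyadicI ((k.1 : ℤ) - 1) m1 ×ˢ dyadicI ((k.2 : ℤ) - 1) m2)
            (fun _ => (1 : ℝ)) x)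

/-- Second order lower bound for the even part of `t ↦ (1 + t) ^ p`, for `1 < p ≤ 2`. -/
lemma two_add_mul_sq_le_rpow_add_rpow {p t : ℝ} (hp : 1 < p) (hp2 : p ≤ 2) (ht0 : 0 ≤ t)
    (ht1 : t ≤ 1) : 2 + p * (p - 1) * t ^ 2 ≤ (1 + t) ^ p + (1 - t) ^ p := by
  have hodd : ∀ t ∈ Set.Icc (0 : ℝ) 1,
      2 * (p - 1) * t ≤ (1 + t) ^ (p - 1) - (1 - t) ^ (p - 1) := by
    have hmono : MonotoneOn
        (fun t : ℝ => (1 + t) ^ (p - 1) - (1 - t) ^ (p - 1) - 2 * (p - 1) * t)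
        (Set.Icc 0 1) := by
      have hd : ∀ t ∈ interior (Set.Icc (0 : ℝ) 1), HasDerivAt
          (fun t : ℝ => (1 + t) ^ (p - 1) - (1 - t) ^ (p - 1) - 2 * (p - 1) * t)
          ((p - 1) * ((1 + t) ^ (p - 1 - 1) + (1 - t) ^ (p - 1 - 1) - 2)) t := by
        intro t ht
        rw [interior_Icc] at ht
        have h1 := ((hasDerivAt_id t).const_add 1).rpow_const (p := p - 1)
          (Or.inl (by simp; linarith [ht.1]))
        have h2 := ((hasDerivAt_id t).const_sub 1).rpow_const (p := p - 1)
          (Or.inl (by simp; linarith [ht.2]))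
        refine ((h1.sub h2).sub ((hasDerivAt_id t).const_mul (2 * (p - 1)))).congr_deriv ?_
        simp only [id]
        ring
      refine monotoneOn_of_deriv_nonneg (convex_Icc 0 1) ?_ ?_ ?_
      · apply ContinuousOn.sub
        · apply ContinuousOn.sub
          · exact ContinuousOn.rpow_const (by fun_prop) (fun x _ => Or.inr (by linarith))
          · exact ContinuousOn.rpow_const (by fun_prop) (fun x _ => Or.inr (by linarith))
        · fun_prop
      · exact fun t ht => (hd t ht).differentiableAt.differentiableWithinAt
      · intro t ht
        rw [(hd t ht).deriv]
        rw [interior_Icc] at ht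
        have ha : 0 < 1 + t := by linarith [ht.1]
        have hb : 0 < 1 - t := by linarith [ht.2]
        have hu : 0 < (1 + t) ^ (p - 1 - 1) := Real.rpow_pos_of_pos ha _
        have hv : 0 < (1 - t) ^ (p - 1 - 1) := Real.rpow_pos_of_pos hb _
        have huv : 1 ≤ (1 + t) ^ (p - 1 - 1) * (1 - t) ^ (p - 1 - 1) := by
          rw [← Real.mul_rpow ha.le hb.le]
          exact Real.one_le_rpow_of_pos_of_le_one_of_nonpos (mul_pos ha hb)
            (by nlinarith [ht.1]) (by linarith)
        apply mul_nonneg (by linarith)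
        nlinarith [sq_nonneg ((1 + t) ^ (p - 1 - 1) - (1 - t) ^ (p - 1 - 1))]
    intro t ht
    have := hmono (Set.left_mem_Icc.2 zero_le_one) ht ht.1
    simp at this
    linarith
  have hmono : MonotoneOn
      (fun t : ℝ => (1 + t) ^ p + (1 - t) ^ p - p * (p - 1) * t ^ 2) (Set.Icc 0 1) := by
    have hd : ∀ t ∈ interior (Set.Icc (0 : ℝ) 1), HasDerivAt
        (fun t : ℝ => (1 + t) ^ p + (1 - t) ^ p - p * (p - 1) * t ^ 2)
        (p * ((1 + t) ^ (p - 1) - (1 - t) ^ (p - 1) - 2 * (p - 1) * t)) t := by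
      intro t ht
      have h1 := ((hasDerivAt_id t).const_add 1).rpow_const (p := p) (Or.inr hp.le)
      have h2 := ((hasDerivAt_id t).const_sub 1).rpow_const (p := p) (Or.inr hp.le)
      refine ((h1.add h2).sub (((hasDerivAt_id t).pow 2).const_mul (p * (p - 1)))).congr_deriv ?_
      simp only [id]
      ring
    refine monotoneOn_of_deriv_nonneg (convex_Icc 0 1) ?_ ?_ ?_
    · apply ContinuousOn.sub
      · apply ContinuousOn.add
        · exact ContinuousOn.rpow_const (by fun_prop) (fun x _ => Or.inr (by linarith))
        · exact ContinuousOn.rpow_const (by fun_prop) (fun x _ => Or.inr (by linarith))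
      · fun_prop
    · exact fun t ht => (hd t ht).differentiableAt.differentiableWithinAt
    · intro t ht
      rw [(hd t ht).deriv]
      have := hodd t (interior_subset ht)
      exact mul_nonneg (by linarith) (by linarith)
  have := hmono (Set.left_mem_Icc.2 zero_le_one) ⟨ht0, ht1⟩ ht0
  simp at this
  linarith

/-- Two-point inequality of Ball, Carlen and Lieb for nonnegative reals, written with `q = p / 2`,
in the range where the first variable dominates. -/
lemma two_mul_rpow_le_of_le {q a b : ℝ} (hq : 1 / 2 < q) (hq1 : q ≤ 1) (hb : 0 ≤ b)
    (hba : b ≤ a) :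
    2 * (a ^ 2 + (2 * q - 1) * b ^ 2) ^ q ≤ ((a + b) ^ 2) ^ q + ((a - b) ^ 2) ^ q := by
  rcases (hb.trans hba).eq_or_lt with ha | ha
  · have : b = 0 := le_antisymm (ha ▸ hba) hb
    subst this
    simp [two_mul]
  set t := b / a with ht
  have hbt : b = a * t := by rw [ht]; field_simp
  have ht0 : 0 ≤ t := by positivity
  have ht1 : t ≤ 1 := (div_le_one ha).2 hba
  have hsq : ∀ u : ℝ, 0 ≤ u → (u ^ 2) ^ q = u ^ (2 * q) := by
    intro u hu
    rw [← Real.rpow_natCast, ← Real.rpow_mul hu]; norm_num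
  have e1 : a ^ 2 + (2 * q - 1) * b ^ 2 = a ^ 2 * (1 + (2 * q - 1) * t ^ 2) := by
    rw [hbt]; ring
  have e2 : (a + b) ^ 2 = a ^ 2 * (1 + t) ^ 2 := by rw [hbt]; ring
  have e3 : (a - b) ^ 2 = a ^ 2 * (1 - t) ^ 2 := by rw [hbt]; ring
  have hnn : 0 ≤ (2 * q - 1) * t ^ 2 := mul_nonneg (by linarith) (sq_nonneg t)
  rw [e1, e2, e3, Real.mul_rpow (sq_nonneg a) (by linarith),
    Real.mul_rpow (sq_nonneg a) (sq_nonneg _), Real.mul_rpow (sq_nonneg a) (sq_nonneg _),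
    hsq (1 + t) (by linarith), hsq (1 - t) (by linarith)]
  have h1 := two_add_mul_sq_le_rpow_add_rpow (p := 2 * q) (by linarith) (by linarith) ht0 ht1
  have h2 := rpow_one_add_le_one_add_mul_self (s := (2 * q - 1) * t ^ 2) (by linarith)
    (p := q) (by linarith) hq1
  have h3 : 0 ≤ (a ^ 2) ^ q := by positivity
  nlinarith

/-- Two-point inequality of Ball, Carlen and Lieb, written with `q = p / 2`. -/
lemma two_mul_rpow_le_add_rpow {q X b r : ℝ} (hq : 1 / 2 < q) (hq1 : q ≤ 1) (hX : 0 ≤ X)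
    (hb : 0 ≤ b) (hr : r ^ 2 ≤ 4 * (X * b)) :
    2 * (X + (2 * q - 1) * b) ^ q ≤ (X + b + r) ^ q + (X + b - r) ^ q := by
  have hscal : ∀ u v : ℝ, 0 ≤ u → 0 ≤ v →
      2 * (u ^ 2 + (2 * q - 1) * v ^ 2) ^ q ≤ ((u + v) ^ 2) ^ q + ((u - v) ^ 2) ^ q := by
    intro u v hu hv
    rcases le_total v u with h | h
    · exact two_mul_rpow_le_of_le hq hq1 hv h
    · have := two_mul_rpow_le_of_le hq hq1 hu h
      have h' : (u ^ 2 + (2 * q - 1) * v ^ 2) ^ q ≤ (v ^ 2 + (2 * q - 1) * u ^ 2) ^ q := by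
        apply Real.rpow_le_rpow _ _ (by linarith)
        · exact add_nonneg (sq_nonneg _) (mul_nonneg (by linarith) (sq_nonneg _))
        · have : u ^ 2 ≤ v ^ 2 := by gcongr
          nlinarith
      rw [add_comm u v, ← sub_sq_comm v u]
      linarith
  have h := hscal (√X) (√b) (Real.sqrt_nonneg _) (Real.sqrt_nonneg _)
  set ρ := 2 * (√X * √b) with hρ
  have hX2 := Real.sq_sqrt hX
  have hb2 := Real.sq_sqrt hb
  have e1 : (√X + √b) ^ 2 = X + b + ρ := by rw [hρ]; nlinarith
  have e2 : (√X - √b) ^ 2 = X + b - ρ := by rw [hρ]; nlinarith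
  rw [hX2, hb2, e1, e2] at h
  refine h.trans ?_
  have hρ0 : 0 ≤ ρ := by positivity
  have hρ2 : ρ ^ 2 = 4 * (X * b) := by
    rw [hρ, mul_pow, mul_pow, hX2, hb2]; norm_num
  have hrρ : |r| ≤ ρ := abs_le_of_sq_le_sq (by linarith) hρ0
  rcases hρ0.eq_or_lt with h0 | h0
  · have : r = 0 := abs_nonpos_iff.1 (h0 ▸ hrρ)
    rw [this, ← h0]
  have hm1 : 0 ≤ X + b + ρ := e1 ▸ sq_nonneg _
  have hm2 : 0 ≤ X + b - ρ := e2 ▸ sq_nonneg _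
  obtain ⟨hl, hu⟩ := abs_le.1 hrρ
  have hw1 : 0 ≤ (ρ + r) / (2 * ρ) := div_nonneg (by linarith) (by linarith)
  have hw2 : 0 ≤ (ρ - r) / (2 * ρ) := div_nonneg (by linarith) (by linarith)
  have hw : (ρ + r) / (2 * ρ) + (ρ - r) / (2 * ρ) = 1 := by field_simp; ring
  have hc := Real.concaveOn_rpow (p := q) (by linarith) hq1
  have c1 := hc.2 hm1 hm2 hw1 hw2 hw
  have c2 := hc.2 hm1 hm2 hw2 hw1 (by rw [add_comm]; exact hw)
  simp only [smul_eq_mul] at c1 c2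
  have f1 : (ρ + r) / (2 * ρ) * (X + b + ρ) + (ρ - r) / (2 * ρ) * (X + b - ρ) = X + b + r := by
    field_simp; ring
  have f2 : (ρ - r) / (2 * ρ) * (X + b + ρ) + (ρ + r) / (2 * ρ) * (X + b - ρ) = X + b - r := by
    field_simp; ring
  rw [f1] at c1
  rw [f2] at c2
  calc (X + b + ρ) ^ q + (X + b - ρ) ^ q
      = ((ρ + r) / (2 * ρ) + (ρ - r) / (2 * ρ)) * ((X + b + ρ) ^ q + (X + b - ρ) ^ q) := by
        rw [hw, one_mul]
    _ ≤ _ := by linarith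

/-- `U X s` is a Bellman function for the square function estimate in `L^p` with constant `C`;
`X` stands for the squared norm of the current value and `s` for the sum of the squared
increments so far. -/
structure IsSquareBellman (p : ℝ) (U : ℝ → ℝ → ℝ) (C : ℝ) : Prop where
  dominates : ∀ X s, 0 ≤ X → 0 ≤ s → s ^ (p / 2) ≤ U X s + C * X ^ (p / 2)
  diag_nonpos : ∀ X, 0 ≤ X → U X X ≤ 0
  step : ∀ X s b r, 0 ≤ X → 0 ≤ s → 0 ≤ b → r ^ 2 ≤ 4 * (X * b) →
    U (X + b + r) (s + b) + U (X + b - r) (s + b) ≤ 2 * U X s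

lemma isSquareBellman_of_two_le {p : ℝ} (hp : 2 ≤ p) :
    IsSquareBellman p (fun X s => 2 * (s ^ (p / 2) - p / 2 * (s ^ (p / 2 - 1) * X)))
      (p ^ (p / 2)) := by
  obtain ⟨q, rfl⟩ : ∃ q, p = 2 * q := ⟨p / 2, by ring⟩
  have hq : 1 ≤ q := by linarith
  simp only [mul_div_cancel_left₀ q (two_ne_zero' ℝ)]
  have hpow : ∀ u : ℝ, 0 ≤ u → u ^ (q - 1) * u = u ^ q := by
    intro u hu
    rcases hu.eq_or_lt with h | h
    · rw [← h, mul_zero, Real.zero_rpow (by linarith)]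
    · rw [← Real.rpow_add_one h.ne']; ring_nf
  refine ⟨?_, ?_, ?_⟩
  · intro X s hX hs
    simp only [mul_div_cancel_left₀ q (two_ne_zero' ℝ)]
    suffices h : s ^ (q - 1) * (2 * q * X) ≤ s ^ q + (2 * q) ^ q * X ^ q by nlinarith
    have h1 : 0 ≤ s ^ q := Real.rpow_nonneg hs _
    have h2 : 0 ≤ (2 * q) ^ q * X ^ q := by positivity
    rcases le_total (2 * q * X) s with h | h
    · have : s ^ (q - 1) * (2 * q * X) ≤ s ^ (q - 1) * s := by gcongr
      rw [hpow s hs] at this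
      linarith
    · have : s ^ (q - 1) * (2 * q * X) ≤ (2 * q * X) ^ (q - 1) * (2 * q * X) := by
        gcongr
      rw [hpow _ (by positivity), Real.mul_rpow (by positivity) hX] at this
      linarith
  · intro X hX
    rw [hpow X hX]
    nlinarith [Real.rpow_nonneg hX q]
  · intro X s b r hX hs hb _
    have h1 : s ^ (q - 1) * X ≤ (s + b) ^ (q - 1) * X := by
      gcongr; linarith
    have h2 : (s + b) ^ q - q * ((s + b) ^ (q - 1) * b) ≤ s ^ q := by
      rcases (add_nonneg hs hb).eq_or_lt with h0 | h0
      · have hs0 : s = 0 := by linarith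
        have hb0 : b = 0 := by linarith
        simp [hs0, hb0]
      · have := one_add_mul_self_le_rpow_one_add (s := -(b / (s + b)))
          (by rw [neg_le_neg_iff, div_le_one h0]; linarith) hq
        have e : 1 + -(b / (s + b)) = s / (s + b) := by field_simp; ring
        rw [e, Real.div_rpow hs h0.le, le_div_iff₀ (Real.rpow_pos_of_pos h0 _)] at this
        calc _ = (1 + q * -(b / (s + b))) * (s + b) ^ q := by
              rw [← hpow (s + b) h0.le]; field_simp; ring
          _ ≤ _ := this
    nlinarith

lemma isSquareBellman_of_le_two {p : ℝ} (hp1 : 1 < p) (hp : p ≤ 2) :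
    IsSquareBellman p (fun X s => (s + X) ^ (p / 2) - 2 / (p - 1) * X ^ (p / 2))
      (2 / (p - 1)) := by
  obtain ⟨q, rfl⟩ : ∃ q, p = 2 * q := ⟨p / 2, by ring⟩
  have hq : 1 / 2 < q := by linarith
  have hq1 : q ≤ 1 := by linarith
  have hk : 0 < 2 * q - 1 := by linarith
  simp only [mul_div_cancel_left₀ q (two_ne_zero' ℝ)]
  have hc := Real.concaveOn_rpow (p := q) (by linarith) hq1
  refine ⟨?_, ?_, ?_⟩
  · intro X s hX hs
    simp only [mul_div_cancel_left₀ q (two_ne_zero' ℝ)]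
    have : s ^ q ≤ (s + X) ^ q := by gcongr; linarith
    linarith
  · intro X hX
    have h1 : (X + X) ^ q = 2 ^ q * X ^ q := by
      rw [← two_mul, Real.mul_rpow (by norm_num) hX]
    have h2 : (2 : ℝ) ^ q ≤ 2 ^ (1 : ℝ) := by gcongr; norm_num
    have h3 : 2 ≤ 2 / (2 * q - 1) := by rw [le_div_iff₀ hk]; linarith
    rw [Real.rpow_one] at h2
    rw [h1, ← sub_mul]
    exact mul_nonpos_of_nonpos_of_nonneg (by linarith) (Real.rpow_nonneg hX _)
  · intro X s b r hX hs hb hr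
    have hrb : |r| ≤ X + b := abs_le_of_sq_le_sq
      (by nlinarith [sq_nonneg (X - b)]) (by positivity)
    obtain ⟨hr1, hr2⟩ := abs_le.1 hrb
    have hBCL := two_mul_rpow_le_add_rpow hq hq1 hX hb hr
    have h1 : (s + b + (X + b + r)) ^ q + (s + b + (X + b - r)) ^ q
        ≤ 2 * (s + X + 2 * b) ^ q := by
      have hu : s + b + (X + b + r) ∈ Set.Ici (0 : ℝ) := Set.mem_Ici.2 (by linarith)
      have hv : s + b + (X + b - r) ∈ Set.Ici (0 : ℝ) := Set.mem_Ici.2 (by linarith)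
      have := hc.2 hu hv one_half_pos.le one_half_pos.le (add_halves 1)
      simp only [smul_eq_mul] at this
      rw [show 1 / 2 * (s + b + (X + b + r)) + 1 / 2 * (s + b + (X + b - r)) = s + X + 2 * b by
        ring] at this
      linarith
    have h2 : (s + X + 2 * b) ^ q + X ^ q ≤ (s + X) ^ q + (X + 2 * b) ^ q := by
      rcases (add_nonneg hs (mul_nonneg zero_le_two hb)).eq_or_lt with h0 | h0
      · have hs0 : s = 0 := by linarith
        have hb0 : b = 0 := by linarith
        simp [hs0, hb0]
      have hw1 : 0 ≤ s / (s + 2 * b) := by positivity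
      have hw2 : 0 ≤ 2 * b / (s + 2 * b) := by positivity
      have hw : s / (s + 2 * b) + 2 * b / (s + 2 * b) = 1 := by field_simp
      have hA : 0 ≤ s + X + 2 * b := by positivity
      have c1 := hc.2 (Set.mem_Ici.2 hA) (Set.mem_Ici.2 hX) hw1 hw2 hw
      have c2 := hc.2 (Set.mem_Ici.2 hA) (Set.mem_Ici.2 hX) hw2 hw1 (by rw [add_comm]; exact hw)
      simp only [smul_eq_mul] at c1 c2
      rw [show s / (s + 2 * b) * (s + X + 2 * b) + 2 * b / (s + 2 * b) * X = s + X by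
        field_simp; ring] at c1
      rw [show 2 * b / (s + 2 * b) * (s + X + 2 * b) + s / (s + 2 * b) * X = X + 2 * b by
        field_simp; ring] at c2
      calc (s + X + 2 * b) ^ q + X ^ q
          = (s / (s + 2 * b) + 2 * b / (s + 2 * b)) * ((s + X + 2 * b) ^ q + X ^ q) := by
            rw [hw, one_mul]
        _ ≤ _ := by linarith
    have h3 : (X + 2 * b) ^ q - X ^ q
        ≤ 2 / (2 * q - 1) * ((X + (2 * q - 1) * b) ^ q - X ^ q) := by
      have hw1 : 0 ≤ (2 * q - 1) / 2 := by linarith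
      have hw2 : 0 ≤ 1 - (2 * q - 1) / 2 := by linarith
      have hA : 0 ≤ X + 2 * b := by positivity
      have c := hc.2 (Set.mem_Ici.2 hA) (Set.mem_Ici.2 hX) hw1 hw2 (by ring)
      simp only [smul_eq_mul] at c
      rw [show (2 * q - 1) / 2 * (X + 2 * b) + (1 - (2 * q - 1) / 2) * X
        = X + (2 * q - 1) * b by ring] at c
      rw [div_mul_eq_mul_div, le_div_iff₀ hk]
      linarith
    have hC : 0 < 2 / (2 * q - 1) := by positivity
    have h4 := mul_le_mul_of_nonneg_left hBCL hC.le
    linarith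

lemma exists_isSquareBellman {p : ℝ} (hp : 1 < p) : ∃ U C, 0 < C ∧ IsSquareBellman p U C := by
  rcases le_total p 2 with h | h
  · exact ⟨_, _, div_pos two_pos (by linarith), isSquareBellman_of_le_two hp h⟩
  · exact ⟨_, _, Real.rpow_pos_of_pos (by linarith) _, isSquareBellman_of_two_le h⟩

lemma sum_range_two_mul {M : Type*} [AddCommMonoid M] (g : ℕ → M) (N : ℕ) :
    ∑ a ∈ Finset.range (2 * N), g a = ∑ b ∈ Finset.range N, (g (2 * b) + g (2 * b + 1)) := by
  induction N with
  | zero => simp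
  | succ N ih => rw [mul_add_one, Finset.sum_range_succ, Finset.sum_range_succ, ih,
      Finset.sum_range_succ, add_assoc]

/-- Differences of a family `A k a`, where `a` numbers the dyadic intervals of level `k` and the
parent of `a` is `a / 2`. -/
def martDiff {V : Type*} [AddCommGroup V] (A : ℕ → ℕ → V) : ℕ → ℕ → V
  | 0, a => A 0 a
  | k + 1, a => A (k + 1) a - A k (a / 2)

lemma martDiff_succ {V : Type*} [AddCommGroup V] (A : ℕ → ℕ → V) (k a : ℕ) :
    martDiff A (k + 1) a = A (k + 1) a - A k (a / 2) := rfl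

/-- Up to level `n`, each value of the family is the mean of the values at its two children. -/
def IsDyadicMartingale {V : Type*} [AddCommGroup V] [Module ℝ V] (n : ℕ) (A : ℕ → ℕ → V) : Prop :=
  ∀ k < n, ∀ a, A (k + 1) (2 * a) + A (k + 1) (2 * a + 1) = (2 : ℝ) • A k a

section Hilbert

variable {H : Type*} [NormedAddCommGroup H]

/-- The square of the square function of a dyadic family, on the `a`-th interval of level `n`. -/
def dyadicSq (A : ℕ → ℕ → H) (n a : ℕ) : ℝ :=
  ∑ k ∈ Finset.range (n + 1), ‖martDiff A k (a / 2 ^ (n - k))‖ ^ 2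

lemma dyadicSq_nonneg (A : ℕ → ℕ → H) (n a : ℕ) : 0 ≤ dyadicSq A n a :=
  Finset.sum_nonneg fun _ _ => by positivity

lemma sum_range_ancestor_succ {M : Type*} [AddCommMonoid M] (g : ℕ → ℕ → M) (n a : ℕ) :
    ∑ k ∈ Finset.range (n + 1 + 1), g k (a / 2 ^ (n + 1 - k)) =
      ∑ k ∈ Finset.range (n + 1), g k (a / 2 / 2 ^ (n - k)) + g (n + 1) a := by
  rw [Finset.sum_range_succ]
  congr 1
  · refine Finset.sum_congr rfl fun k hk => ?_
    have : n + 1 - k = (n - k) + 1 := by have := Finset.mem_range.1 hk; omega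
    rw [this, pow_succ', Nat.div_div_eq_div_mul]
  · simp

lemma dyadicSq_succ (A : ℕ → ℕ → H) (n a : ℕ) :
    dyadicSq A (n + 1) a = dyadicSq A n (a / 2) + ‖martDiff A (n + 1) a‖ ^ 2 :=
  sum_range_ancestor_succ (fun k c => ‖martDiff A k c‖ ^ 2) n a

lemma dyadic_children {V : Type*} [AddCommGroup V] [Module ℝ V] {n k : ℕ} {A : ℕ → ℕ → V}
    (hA : IsDyadicMartingale n A) (hk : k < n) (b : ℕ) :
    ∃ d, A (k + 1) (2 * b) = A k b + d ∧ A (k + 1) (2 * b + 1) = A k b - d ∧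
      martDiff A (k + 1) (2 * b) = d ∧ martDiff A (k + 1) (2 * b + 1) = -d := by
  have h := hA k hk b
  have h2 : A (k + 1) (2 * b + 1) = A k b - (A (k + 1) (2 * b) - A k b) := by
    rw [two_smul] at h
    rw [sub_sub_eq_add_sub, ← h]
    abel
  refine ⟨A (k + 1) (2 * b) - A k b, by abel, h2, ?_, ?_⟩
  · simp [martDiff]
  · rw [martDiff, show (2 * b + 1) / 2 = b by omega, h2]
    abel

variable [InnerProductSpace ℝ H]

lemma sum_bellman_nonpos {p C : ℝ} {U : ℝ → ℝ → ℝ} (hU : IsSquareBellman p U C) {n : ℕ}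
    {A : ℕ → ℕ → H} (hA : IsDyadicMartingale n A) {k : ℕ} (hk : k ≤ n) :
    ∑ a ∈ Finset.range (2 ^ k), U (‖A k a‖ ^ 2) (dyadicSq A k a) ≤ 0 := by
  induction k with
  | zero =>
    simpa [dyadicSq, martDiff] using hU.diag_nonpos (‖A 0 0‖ ^ 2) (by positivity)
  | succ k ih =>
    rw [pow_succ', sum_range_two_mul]
    have hstep : ∀ b, U (‖A (k + 1) (2 * b)‖ ^ 2) (dyadicSq A (k + 1) (2 * b)) +
        U (‖A (k + 1) (2 * b + 1)‖ ^ 2) (dyadicSq A (k + 1) (2 * b + 1)) ≤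
        2 * U (‖A k b‖ ^ 2) (dyadicSq A k b) := by
      intro b
      obtain ⟨d, h1, h2, h3, h4⟩ := dyadic_children hA hk b
      rw [dyadicSq_succ, dyadicSq_succ, h1, h2, h3, h4, norm_neg, norm_add_sq_real,
        norm_sub_sq_real, show 2 * b / 2 = b by omega, show (2 * b + 1) / 2 = b by omega]
      have hin : (2 * inner ℝ (A k b) d) ^ 2 ≤ 4 * (‖A k b‖ ^ 2 * ‖d‖ ^ 2) := by
        have := abs_real_inner_le_norm (A k b) d
        have h5 : (inner ℝ (A k b) d) ^ 2 ≤ (‖A k b‖ * ‖d‖) ^ 2 := sq_le_sq' (by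
          linarith [abs_le.1 this]) (le_of_abs_le this)
        nlinarith
      have := hU.step (‖A k b‖ ^ 2) (dyadicSq A k b) (‖d‖ ^ 2) (2 * inner ℝ (A k b) d)
        (by positivity) (dyadicSq_nonneg _ _ _) (by positivity) hin
      convert this using 3 <;> ring
    calc _ ≤ ∑ b ∈ Finset.range (2 ^ k), 2 * U (‖A k b‖ ^ 2) (dyadicSq A k b) :=
          Finset.sum_le_sum fun b _ => hstep b
      _ ≤ 0 := by
          rw [← Finset.mul_sum]
          linarith [ih (by omega)]

/-- The square function is bounded in `L^p`, for Hilbert space valued dyadic martingales. -/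
lemma sum_dyadicSq_rpow_le {p C : ℝ} {U : ℝ → ℝ → ℝ} (hU : IsSquareBellman p U C) {n : ℕ}
    {A : ℕ → ℕ → H} (hA : IsDyadicMartingale n A) :
    ∑ a ∈ Finset.range (2 ^ n), dyadicSq A n a ^ (p / 2) ≤
      C * ∑ a ∈ Finset.range (2 ^ n), ‖A n a‖ ^ p := by
  have h := sum_bellman_nonpos hU hA le_rfl
  calc _ ≤ ∑ a ∈ Finset.range (2 ^ n),
        (U (‖A n a‖ ^ 2) (dyadicSq A n a) + C * ‖A n a‖ ^ p) := by
        refine Finset.sum_le_sum fun a _ => ?_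
        have := hU.dominates (‖A n a‖ ^ 2) _ (by positivity) (dyadicSq_nonneg A n a)
        rwa [← Real.rpow_natCast, ← Real.rpow_mul (norm_nonneg _),
          show ((2 : ℕ) : ℝ) * (p / 2) = p by push_cast; ring, Real.rpow_natCast] at this
    _ ≤ _ := by
        rw [Finset.sum_add_distrib, ← Finset.mul_sum]
        linarith

lemma sum_inner_eq_sum_martDiff {n : ℕ} {A B : ℕ → ℕ → H} (hA : IsDyadicMartingale n A)
    (hB : IsDyadicMartingale n B) {k : ℕ} (hk : k ≤ n) :
    ∑ a ∈ Finset.range (2 ^ k), inner ℝ (A k a) (B k a) =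
      ∑ a ∈ Finset.range (2 ^ k), ∑ j ∈ Finset.range (k + 1),
        inner ℝ (martDiff A j (a / 2 ^ (k - j))) (martDiff B j (a / 2 ^ (k - j))) := by
  induction k with
  | zero => simp [martDiff]
  | succ k ih =>
    simp only [sum_range_ancestor_succ (fun j c => inner ℝ (martDiff A j c) (martDiff B j c))]
    rw [pow_succ', sum_range_two_mul, sum_range_two_mul]
    have e1 : ∀ b, 2 * b / 2 = b := fun b => by omega
    have e2 : ∀ b, (2 * b + 1) / 2 = b := fun b => by omega
    simp only [e1, e2]
    have h : ∀ b, inner ℝ (A (k + 1) (2 * b)) (B (k + 1) (2 * b)) +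
        inner ℝ (A (k + 1) (2 * b + 1)) (B (k + 1) (2 * b + 1)) =
        2 * inner ℝ (A k b) (B k b) +
          (inner ℝ (martDiff A (k + 1) (2 * b)) (martDiff B (k + 1) (2 * b)) +
          inner ℝ (martDiff A (k + 1) (2 * b + 1)) (martDiff B (k + 1) (2 * b + 1))) := by
      intro b
      obtain ⟨d, h1, h2, h3, h4⟩ := dyadic_children hA hk b
      obtain ⟨d', h1', h2', h3', h4'⟩ := dyadic_children hB hk b
      rw [h1, h2, h3, h4, h1', h2', h3', h4']
      simp only [inner_add_left, inner_add_right, inner_sub_left, inner_sub_right,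
        inner_neg_left, inner_neg_right]
      ring
    rw [Finset.sum_congr rfl fun b _ => h b, Finset.sum_add_distrib, ← Finset.mul_sum,
      ih (by omega), Finset.mul_sum, ← Finset.sum_add_distrib]
    refine Finset.sum_congr rfl fun b _ => ?_
    ring

lemma exists_young {p q ε : ℝ} (hpq : p.HolderConjugate q) (hε : 0 < ε) :
    ∃ K, 0 < K ∧ ∀ u v : ℝ, 0 ≤ u → 0 ≤ v → u * v ≤ K * u ^ p + ε * v ^ q := by
  set t := ε ^ q⁻¹ with ht
  have ht0 : 0 < t := Real.rpow_pos_of_pos hε _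
  have htq : t ^ q = ε := by
    rw [ht, ← Real.rpow_mul hε.le, inv_mul_cancel₀ hpq.symm.ne_zero, Real.rpow_one]
  refine ⟨(t⁻¹) ^ p, Real.rpow_pos_of_pos (inv_pos.2 ht0) _, fun u v hu hv => ?_⟩
  have h := Real.young_inequality_of_nonneg (a := t⁻¹ * u) (b := t * v) (by positivity)
    (by positivity) hpq
  rw [Real.mul_rpow (by positivity) hu, Real.mul_rpow ht0.le hv, htq] at h
  calc u * v = t⁻¹ * u * (t * v) := by field_simp
    _ ≤ _ := h
    _ ≤ _ := add_le_add (div_le_self (by positivity) hpq.lt.le)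
        (div_le_self (by positivity) hpq.symm.lt.le)

/-- The mean of `g` over the two children of `a`. -/
noncomputable def dyadicMean (g : ℕ → H) (a : ℕ) : H := (1 / 2 : ℝ) • (g (2 * a) + g (2 * a + 1))

lemma isDyadicMartingale_iterate_dyadicMean (g : ℕ → H) (n : ℕ) :
    IsDyadicMartingale n (fun k => dyadicMean^[n - k] g) := by
  intro k hk a
  simp only
  rw [show n - k = (n - (k + 1)) + 1 by omega, Function.iterate_succ_apply']
  simp [dyadicMean, smul_smul]

/-- Converse of the `L^p` bound for the square function. -/
lemma exists_sum_norm_rpow_le {p : ℝ} (hp : 1 < p) : ∃ K : ℝ, 0 < K ∧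
    ∀ (H : Type) [NormedAddCommGroup H] [InnerProductSpace ℝ H] (n : ℕ) (A : ℕ → ℕ → H),
      IsDyadicMartingale n A → ∑ a ∈ Finset.range (2 ^ n), ‖A n a‖ ^ p ≤
        K * ∑ a ∈ Finset.range (2 ^ n), dyadicSq A n a ^ (p / 2) := by
  have hpq := Real.HolderConjugate.conjExponent hp
  set q := p.conjExponent
  obtain ⟨U, C, hC, hU⟩ := exists_isSquareBellman hpq.symm.lt
  obtain ⟨K, hK, hyoung⟩ := exists_young hpq (ε := 1 / (2 * C)) (by positivity)
  refine ⟨2 * K, by positivity, fun H _ _ n A hA => ?_⟩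
  set B : ℕ → ℕ → H := fun k => dyadicMean^[n - k] (fun a => ‖A n a‖ ^ (p - 2) • A n a) with hB
  have hBn : ∀ a, B n a = ‖A n a‖ ^ (p - 2) • A n a := by intro a; simp [hB]
  have hBm : IsDyadicMartingale n B := isDyadicMartingale_iterate_dyadicMean _ n
  have hBq : ∀ a, ‖B n a‖ ^ q = ‖A n a‖ ^ p := by
    intro a
    rw [hBn, norm_smul, Real.norm_of_nonneg (by positivity)]
    rcases (norm_nonneg (A n a)).eq_or_lt with h | h
    · rw [← h, mul_zero, Real.zero_rpow hpq.symm.ne_zero, Real.zero_rpow (by linarith)]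
    · rw [← Real.rpow_add_one h.ne', ← Real.rpow_mul h.le]
      congr 1
      linarith [hpq.sub_one_mul_conj]
  have hAB : ∀ a, inner ℝ (A n a) (B n a) = ‖A n a‖ ^ p := by
    intro a
    rw [hBn, inner_smul_right, real_inner_self_eq_norm_sq]
    rcases (norm_nonneg (A n a)).eq_or_lt with h | h
    · rw [← h, Real.zero_rpow (show p ≠ 0 by linarith)]; simp
    · rw [← Real.rpow_natCast, ← Real.rpow_add h]; norm_num
  have hCS : ∀ a, ∑ j ∈ Finset.range (n + 1),
      inner ℝ (martDiff A j (a / 2 ^ (n - j))) (martDiff B j (a / 2 ^ (n - j))) ≤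
      K * dyadicSq A n a ^ (p / 2) + 1 / (2 * C) * dyadicSq B n a ^ (q / 2) := by
    intro a
    have hs : ∀ (s : ℝ) (r : ℝ), 0 ≤ s → √s ^ r = s ^ (r / 2) := by
      intro s r hs
      rw [Real.sqrt_eq_rpow, ← Real.rpow_mul hs]
      ring_nf
    rw [← hs _ _ (dyadicSq_nonneg A n a), ← hs _ _ (dyadicSq_nonneg B n a)]
    refine le_trans ?_ (hyoung _ _ (Real.sqrt_nonneg _) (Real.sqrt_nonneg _))
    refine le_trans (Finset.sum_le_sum fun j _ => real_inner_le_norm _ _) ?_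
    exact Real.sum_mul_le_sqrt_mul_sqrt _ _ _
  have h1 := sum_dyadicSq_rpow_le hU hBm
  simp only [hBq] at h1
  have h2 : ∑ a ∈ Finset.range (2 ^ n), ‖A n a‖ ^ p ≤
      K * ∑ a ∈ Finset.range (2 ^ n), dyadicSq A n a ^ (p / 2) +
      1 / (2 * C) * ∑ a ∈ Finset.range (2 ^ n), dyadicSq B n a ^ (q / 2) := by
    rw [← Finset.sum_congr rfl fun a _ => hAB a, sum_inner_eq_sum_martDiff hA hBm le_rfl,
      Finset.mul_sum, Finset.mul_sum, ← Finset.sum_add_distrib]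
    exact Finset.sum_le_sum fun a _ => hCS a
  have h3 := mul_le_mul_of_nonneg_left h1 (show 0 ≤ 1 / (2 * C) by positivity)
  have h4 : 1 / (2 * C) * (C * ∑ a ∈ Finset.range (2 ^ n), ‖A n a‖ ^ p) =
      1 / 2 * ∑ a ∈ Finset.range (2 ^ n), ‖A n a‖ ^ p := by field_simp
  linarith

end Hilbert

/-- The square of the square function of a two-parameter dyadic family `A k a l b`, on the
rectangle numbered `(a, b)` among those of level `(n, n)`. -/
def dyadicSq₂ (A : ℕ → ℕ → ℕ → ℕ → ℝ) (n a b : ℕ) : ℝ :=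
  ∑ k ∈ Finset.range (n + 1), ∑ l ∈ Finset.range (n + 1),
    martDiff (martDiff A k (a / 2 ^ (n - k))) l (b / 2 ^ (n - l)) ^ 2

lemma martDiff_martDiff (A : ℕ → ℕ → ℕ → ℕ → ℝ) (k a l b : ℕ) :
    martDiff (martDiff A k a) l b = martDiff (fun k a => martDiff (A k a) l b) k a := by
  cases k <;> cases l <;> simp [martDiff]
  ring

/-- Freezing the second variable at level `n` turns a two-parameter family into a Euclidean-valued
one-parameter family. -/
lemma exists_euclidean_slice {A : ℕ → ℕ → ℕ → ℕ → ℝ} {n : ℕ} (hA : IsDyadicMartingale n A)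
    (b : ℕ) : ∃ B : ℕ → ℕ → EuclideanSpace ℝ (Fin (n + 1)), IsDyadicMartingale n B ∧
      (∀ a, dyadicSq B n a = dyadicSq₂ A n a b) ∧
      ∀ k a, ‖B k a‖ ^ 2 = dyadicSq (A k a) n b := by
  set B : ℕ → ℕ → EuclideanSpace ℝ (Fin (n + 1)) :=
    fun k a => WithLp.toLp 2 fun l => martDiff (A k a) l (b / 2 ^ (n - (l : ℕ))) with hB
  have hdiff : ∀ k a (l : Fin (n + 1)),
      martDiff B k a l = martDiff (martDiff A k a) l (b / 2 ^ (n - (l : ℕ))) := by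
    intro k a l
    rw [martDiff_martDiff]
    cases k <;> simp [martDiff, hB]
  refine ⟨B, ?_, ?_, ?_⟩
  · intro k hk a
    have h := hA k hk a
    ext l
    have h' : ∀ m c, A (k + 1) (2 * a) m c + A (k + 1) (2 * a + 1) m c = 2 * A k a m c :=
      fun m c => congrFun (congrFun h m) c
    simp only [hB, PiLp.add_apply, PiLp.smul_apply, smul_eq_mul]
    rcases (l : ℕ) with _ | m
    · simp only [martDiff, h']
    · simp only [martDiff]
      linarith [h' (m + 1) (b / 2 ^ (n - (m + 1))), h' m (b / 2 ^ (n - (m + 1)) / 2)]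
  · intro a
    rw [dyadicSq, dyadicSq₂]
    refine Finset.sum_congr rfl fun k _ => ?_
    rw [EuclideanSpace.norm_sq_eq, Finset.sum_range]
    simp [hdiff]
  · intro k a
    rw [dyadicSq, EuclideanSpace.norm_sq_eq, Finset.sum_range]

lemma exists_slice_rpow {A : ℕ → ℕ → ℕ → ℕ → ℝ} {n : ℕ} (hA : IsDyadicMartingale n A)
    (p : ℝ) (b : ℕ) : ∃ B : ℕ → ℕ → EuclideanSpace ℝ (Fin (n + 1)), IsDyadicMartingale n B ∧
      (∀ a, dyadicSq B n a = dyadicSq₂ A n a b) ∧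
      ∀ a, ‖B n a‖ ^ p = dyadicSq (A n a) n b ^ (p / 2) := by
  obtain ⟨B, h1, h2, h3⟩ := exists_euclidean_slice hA b
  refine ⟨B, h1, h2, fun a => ?_⟩
  rw [← h3, ← Real.rpow_natCast, ← Real.rpow_mul (norm_nonneg _)]
  congr 1
  push_cast
  ring

/-- Discrete two-parameter Littlewood–Paley inequality. -/
lemma exists_discrete_littlewoodPaley {p : ℝ} (hp : 1 < p) : ∃ K : ℝ, 0 < K ∧
    ∀ (n : ℕ) (A : ℕ → ℕ → ℕ → ℕ → ℝ), IsDyadicMartingale n A →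
      (∀ k a, IsDyadicMartingale n (A k a)) →
      (∑ a ∈ Finset.range (2 ^ n), ∑ b ∈ Finset.range (2 ^ n), dyadicSq₂ A n a b ^ (p / 2) ≤
        K * ∑ a ∈ Finset.range (2 ^ n), ∑ b ∈ Finset.range (2 ^ n), |A n a n b| ^ p) ∧
      (∑ a ∈ Finset.range (2 ^ n), ∑ b ∈ Finset.range (2 ^ n), |A n a n b| ^ p ≤
        K * ∑ a ∈ Finset.range (2 ^ n), ∑ b ∈ Finset.range (2 ^ n),
          dyadicSq₂ A n a b ^ (p / 2)) := by
  obtain ⟨U, C, hC, hU⟩ := exists_isSquareBellman hp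
  obtain ⟨K, hK, hlow⟩ := exists_sum_norm_rpow_le hp
  have key : ∀ (n : ℕ) (A : ℕ → ℕ → ℕ → ℕ → ℝ), IsDyadicMartingale n A →
      (∀ k a, IsDyadicMartingale n (A k a)) →
      (∑ a ∈ Finset.range (2 ^ n), ∑ b ∈ Finset.range (2 ^ n), dyadicSq₂ A n a b ^ (p / 2) ≤
        C * C * ∑ a ∈ Finset.range (2 ^ n), ∑ b ∈ Finset.range (2 ^ n), |A n a n b| ^ p) ∧
      (∑ a ∈ Finset.range (2 ^ n), ∑ b ∈ Finset.range (2 ^ n), |A n a n b| ^ p ≤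
        K * K * ∑ a ∈ Finset.range (2 ^ n), ∑ b ∈ Finset.range (2 ^ n),
          dyadicSq₂ A n a b ^ (p / 2)) := by
    intro n A hA hA'
    choose B hB hBsq hBn using fun b => exists_slice_rpow hA p b
    have u1 : ∑ b ∈ Finset.range (2 ^ n), ∑ a ∈ Finset.range (2 ^ n),
        dyadicSq₂ A n a b ^ (p / 2) ≤
        C * ∑ b ∈ Finset.range (2 ^ n), ∑ a ∈ Finset.range (2 ^ n),
          dyadicSq (A n a) n b ^ (p / 2) := by
      rw [Finset.mul_sum]
      refine Finset.sum_le_sum fun b _ => ?_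
      simpa only [hBsq, hBn] using sum_dyadicSq_rpow_le hU (hB b)
    have u2 : ∑ a ∈ Finset.range (2 ^ n), ∑ b ∈ Finset.range (2 ^ n),
          dyadicSq (A n a) n b ^ (p / 2) ≤
        C * ∑ a ∈ Finset.range (2 ^ n), ∑ b ∈ Finset.range (2 ^ n), |A n a n b| ^ p := by
      rw [Finset.mul_sum]
      exact Finset.sum_le_sum fun a _ => sum_dyadicSq_rpow_le hU (hA' n a)
    have l1 : ∑ b ∈ Finset.range (2 ^ n), ∑ a ∈ Finset.range (2 ^ n),
          dyadicSq (A n a) n b ^ (p / 2) ≤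
        K * ∑ b ∈ Finset.range (2 ^ n), ∑ a ∈ Finset.range (2 ^ n),
        dyadicSq₂ A n a b ^ (p / 2) := by
      rw [Finset.mul_sum]
      refine Finset.sum_le_sum fun b _ => ?_
      simpa only [hBsq, hBn] using hlow _ n (B b) (hB b)
    have l2 : ∑ a ∈ Finset.range (2 ^ n), ∑ b ∈ Finset.range (2 ^ n), |A n a n b| ^ p ≤
        K * ∑ a ∈ Finset.range (2 ^ n), ∑ b ∈ Finset.range (2 ^ n),
          dyadicSq (A n a) n b ^ (p / 2) := by
      rw [Finset.mul_sum]
      exact Finset.sum_le_sum fun a _ => hlow _ n (A n a) (hA' n a)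
    rw [Finset.sum_comm, Finset.sum_comm (f := fun b a => dyadicSq (A n a) n b ^ (p / 2))] at u1
    rw [Finset.sum_comm, Finset.sum_comm (f := fun b a => dyadicSq₂ A n a b ^ (p / 2))] at l1
    constructor
    · calc _ ≤ _ := u1
        _ ≤ _ := mul_le_mul_of_nonneg_left u2 hC.le
        _ = _ := by ring
    · calc _ ≤ _ := l2
        _ ≤ _ := mul_le_mul_of_nonneg_left l1 hK.le
        _ = _ := by ring
  refine ⟨max (C * C) (K * K), lt_max_of_lt_left (by positivity), fun n A hA hA' => ⟨?_, ?_⟩⟩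
  · refine (key n A hA hA').1.trans (mul_le_mul_of_nonneg_right (le_max_left _ _) ?_)
    exact Finset.sum_nonneg fun a _ => Finset.sum_nonneg fun b _ => by positivity
  · refine (key n A hA hA').2.trans (mul_le_mul_of_nonneg_right (le_max_right _ _) ?_)
    refine Finset.sum_nonneg fun a _ => Finset.sum_nonneg fun b _ => Real.rpow_nonneg ?_ _
    exact Finset.sum_nonneg fun k _ => Finset.sum_nonneg fun l _ => sq_nonneg _

/-- The `a`-th dyadic interval of level `k`. -/
def dyadicIco (k a : ℕ) : Set ℝ := Set.Ico ((a : ℝ) / 2 ^ k) ((a + 1 : ℝ) / 2 ^ k)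

lemma mem_dyadicIco_iff {k a : ℕ} {x : ℝ} :
    x ∈ dyadicIco k a ↔ (a : ℝ) ≤ 2 ^ k * x ∧ 2 ^ k * x < a + 1 := by
  have h : (0 : ℝ) < 2 ^ k := by positivity
  rw [dyadicIco, Set.mem_Ico, div_le_iff₀' h, lt_div_iff₀' h]

lemma mem_dyadicIco_iff_floor {k a : ℕ} {x : ℝ} (hx : 0 ≤ x) :
    x ∈ dyadicIco k a ↔ ⌊2 ^ k * x⌋₊ = a := by
  rw [mem_dyadicIco_iff, Nat.floor_eq_iff (by positivity)]

lemma floor_two_pow_mul {k n : ℕ} (h : k ≤ n) (x : ℝ) :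
    ⌊2 ^ k * x⌋₊ = ⌊2 ^ n * x⌋₊ / 2 ^ (n - k) := by
  have := Nat.floor_div_natCast (2 ^ n * x) (2 ^ (n - k))
  rw [← this]
  congr 1
  push_cast
  rw [eq_div_iff (by positivity), mul_right_comm, ← pow_add, Nat.add_sub_cancel' h]

lemma floor_two_pow_mul_lt {n : ℕ} {x : ℝ} (hx : x ∈ Set.Ico (0 : ℝ) 1) :
    ⌊2 ^ n * x⌋₊ < 2 ^ n := by
  have h : (0 : ℝ) < 2 ^ n := by positivity
  rw [Nat.floor_lt (mul_nonneg h.le hx.1)]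
  push_cast
  nlinarith [hx.2]

/-- The density of the uniform distribution on the `a`-th dyadic interval of level `k`. -/
noncomputable def dyadicKernel (k a : ℕ) : ℝ → ℝ := (dyadicIco k a).indicator fun _ => 2 ^ k

lemma dyadicKernel_apply (k a : ℕ) (x : ℝ) :
    dyadicKernel k a x = if (a : ℝ) ≤ 2 ^ k * x ∧ 2 ^ k * x < a + 1 then 2 ^ k else 0 := by
  classical
  rw [dyadicKernel, Set.indicator_apply]
  exact if_congr mem_dyadicIco_iff rfl rfl

lemma measurable_dyadicKernel (k a : ℕ) : Measurable (dyadicKernel k a) :=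
  measurable_const.indicator measurableSet_Ico

lemma norm_dyadicKernel_le (k a : ℕ) (x : ℝ) : ‖dyadicKernel k a x‖ ≤ 2 ^ k := by
  rw [dyadicKernel_apply]
  split_ifs <;> simp

lemma isDyadicMartingale_dyadicKernel (n : ℕ) : IsDyadicMartingale n dyadicKernel := by
  intro k _ a
  ext x
  simp only [Pi.add_apply, Pi.smul_apply, smul_eq_mul, dyadicKernel_apply]
  push_cast
  rw [pow_succ']
  split_ifs <;> grind

lemma two_pow_mul_haar1 (j m : ℕ) (x : ℝ) :
    2 ^ j * haar1 (j : ℤ) m x = dyadicKernel (j + 1) (2 * m) x - dyadicKernel j m x := by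
  have h : (0 : ℝ) < 2 ^ (j + 1) := by positivity
  rw [haar1, if_neg (by omega), dyadicKernel_apply, dyadicKernel_apply, Int.toNat_natCast]
  simp only [div_le_iff₀' h, lt_div_iff₀' h]
  push_cast
  rw [pow_succ']
  split_ifs <;> grind

lemma dyadicI_eq (k m : ℕ) (hm : m < 2 ^ ((k : ℤ) - 1).toNat) :
    dyadicI ((k : ℤ) - 1) m = dyadicIco ((k : ℤ) - 1).toNat m := by
  rcases k with _ | k
  · have : m = 0 := by simpa using hm
    simp [dyadicI, dyadicIco, this]
  · rw [dyadicI, if_neg (by push_cast; omega), dyadicIco]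

lemma exists_haar1_eq (k : ℕ) {x : ℝ} (hx : x ∈ Set.Ico (0 : ℝ) 1) :
    ∃ ε : ℝ, ε ^ 2 = 1 ∧ ∀ t,
      2 ^ ((k : ℤ) - 1).toNat * haar1 ((k : ℤ) - 1) ⌊2 ^ ((k : ℤ) - 1).toNat * x⌋₊ t =
        ε * martDiff dyadicKernel k ⌊2 ^ k * x⌋₊ t := by
  rcases k with _ | k
  · refine ⟨1, by norm_num, fun t => ?_⟩
    have : ⌊x⌋₊ = 0 := Nat.floor_eq_zero.2 hx.2
    simp [haar1, martDiff, dyadicKernel_apply, this]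
  · have hm := floor_two_pow_mul (Nat.le_succ k) x
    rw [show k.succ - k = 1 by omega, pow_one] at hm
    have e : ((k + 1 : ℕ) : ℤ) - 1 = (k : ℤ) := by push_cast; ring
    rw [e, Int.toNat_natCast]
    simp only [two_pow_mul_haar1, hm]
    set a := ⌊2 ^ k.succ * x⌋₊
    rcases Nat.even_or_odd' a with ⟨m, h | h⟩
    · refine ⟨1, by norm_num, fun t => ?_⟩
      rw [h, show 2 * m / 2 = m by omega]
      simp [martDiff]
    · refine ⟨-1, by norm_num, fun t => ?_⟩
      rw [h, show (2 * m + 1) / 2 = m by omega]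
      have := congrFun (isDyadicMartingale_dyadicKernel (k + 1) k (by omega) m) t
      simp only [Pi.add_apply, Pi.smul_apply, smul_eq_mul] at this
      simp only [martDiff, Pi.sub_apply, show (2 * m + 1) / 2 = m by omega]
      linarith

/-- The half-open unit square. -/
def unitSq : Set (ℝ × ℝ) := Set.Ico 0 1 ×ˢ Set.Ico 0 1

lemma restrict_Icc_eq_restrict_unitSq :
    (volume : Measure (ℝ × ℝ)).restrict (Set.Icc 0 1) = volume.restrict unitSq := by
  refine Measure.restrict_congr_set ?_
  rw [show (Set.Icc 0 1 : Set (ℝ × ℝ)) = Set.Icc 0 1 ×ˢ Set.Icc 0 1 from Set.Icc_prod_eq _ _]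
  exact (Measure.set_prod_ae_eq Ico_ae_eq_Icc Ico_ae_eq_Icc).symm

lemma measurableSet_unitSq : MeasurableSet unitSq := measurableSet_Ico.prod measurableSet_Ico

/-- The mean of `f` over the dyadic rectangle with sides `a` of level `k` and `b` of level `l`. -/
noncomputable def dyadicCoeff (f : ℝ × ℝ → ℝ) (k a l b : ℕ) : ℝ :=
  ∫ t in unitSq, f t * (dyadicKernel k a t.1 * dyadicKernel l b t.2)

lemma integrableOn_mul_dyadicKernel {f : ℝ × ℝ → ℝ} (hf : IntegrableOn f unitSq)
    (k a l b : ℕ) :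
    IntegrableOn (fun t => f t * (dyadicKernel k a t.1 * dyadicKernel l b t.2)) unitSq := by
  refine Integrable.mul_bdd (c := 2 ^ k * 2 ^ l) hf ?_ ?_
  · exact (((measurable_dyadicKernel k a).comp measurable_fst).mul
      ((measurable_dyadicKernel l b).comp measurable_snd)).aestronglyMeasurable
  · refine Filter.Eventually.of_forall fun t => ?_
    rw [norm_mul]
    gcongr <;> exact norm_dyadicKernel_le _ _ _

lemma isDyadicMartingale_dyadicCoeff {f : ℝ × ℝ → ℝ} (hf : IntegrableOn f unitSq) (n : ℕ) :
    IsDyadicMartingale n (dyadicCoeff f) := by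
  intro k hk a
  ext l b
  have h := isDyadicMartingale_dyadicKernel n k hk a
  simp only [Pi.add_apply, Pi.smul_apply, smul_eq_mul, dyadicCoeff]
  rw [← integral_add (integrableOn_mul_dyadicKernel hf _ _ _ _)
    (integrableOn_mul_dyadicKernel hf _ _ _ _), ← integral_const_mul]
  refine integral_congr_ae (Filter.Eventually.of_forall fun t => ?_)
  have h' := congrFun h t.1
  simp only [Pi.add_apply, Pi.smul_apply, smul_eq_mul] at h' ⊢
  linear_combination f t * dyadicKernel l b t.2 * h'

lemma isDyadicMartingale_dyadicCoeff_apply {f : ℝ × ℝ → ℝ} (hf : IntegrableOn f unitSq)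
    (n k a : ℕ) : IsDyadicMartingale n (dyadicCoeff f k a) := by
  intro l hl b
  have h := isDyadicMartingale_dyadicKernel n l hl b
  simp only [smul_eq_mul, dyadicCoeff]
  rw [← integral_add (integrableOn_mul_dyadicKernel hf _ _ _ _)
    (integrableOn_mul_dyadicKernel hf _ _ _ _), ← integral_const_mul]
  refine integral_congr_ae (Filter.Eventually.of_forall fun t => ?_)
  have h' := congrFun h t.2
  simp only [Pi.add_apply, Pi.smul_apply, smul_eq_mul] at h' ⊢
  linear_combination f t * dyadicKernel k a t.1 * h'

lemma martDiff_dyadicCoeff {f : ℝ × ℝ → ℝ} (hf : IntegrableOn f unitSq) (k a l b : ℕ) :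
    martDiff (martDiff (dyadicCoeff f) k a) l b =
      ∫ t in unitSq, f t * (martDiff dyadicKernel k a t.1 * martDiff dyadicKernel l b t.2) := by
  have hI := integrableOn_mul_dyadicKernel hf
  have hfst : ∀ l b, martDiff (dyadicCoeff f) k a l b =
      ∫ t in unitSq, f t * (martDiff dyadicKernel k a t.1 * dyadicKernel l b t.2) := by
    intro l b
    rcases k with _ | k
    · rfl
    · simp only [martDiff, Pi.sub_apply, dyadicCoeff]
      rw [← integral_sub (hI _ _ _ _) (hI _ _ _ _)]
      simp only [sub_mul, mul_sub]
  have hI' : ∀ l b, IntegrableOn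
      (fun t => f t * (martDiff dyadicKernel k a t.1 * dyadicKernel l b t.2)) unitSq := by
    intro l b
    rcases k with _ | k
    · exact hI _ _ _ _
    · simp only [martDiff, Pi.sub_apply, sub_mul, mul_sub]
      exact (hI _ _ _ _).sub (hI _ _ _ _)
  rcases l with _ | l
  · exact hfst _ _
  · simp only [martDiff_succ _ l, Pi.sub_apply, hfst]
    rw [← integral_sub (hI' _ _) (hI' _ _)]
    simp only [mul_sub]

/-- The contribution of the levels `k` to the square function at `x`. -/
noncomputable def sqTerm (f : ℝ × ℝ → ℝ) (k : ℕ × ℕ) (x : ℝ × ℝ) : ℝ :=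
  martDiff (martDiff (dyadicCoeff f) k.1 ⌊2 ^ k.1 * x.1⌋₊) k.2 ⌊2 ^ k.2 * x.2⌋₊ ^ 2

lemma sqTerm_nonneg (f : ℝ × ℝ → ℝ) (k : ℕ × ℕ) (x : ℝ × ℝ) : 0 ≤ sqTerm f k x := sq_nonneg _

lemma measurable_sqTerm (f : ℝ × ℝ → ℝ) (k : ℕ × ℕ) : Measurable (sqTerm f k) := by
  have : Measurable fun x : ℝ × ℝ => (⌊2 ^ k.1 * x.1⌋₊, ⌊2 ^ k.2 * x.2⌋₊) := by
    refine Measurable.prodMk ?_ ?_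
    · exact Nat.measurable_floor.comp (by fun_prop)
    · exact Nat.measurable_floor.comp (by fun_prop)
  exact (Measurable.of_discrete (f := fun c : ℕ × ℕ =>
    martDiff (martDiff (dyadicCoeff f) k.1 c.1) k.2 c.2 ^ 2)).comp this

lemma sqFn_eq_sqrt_tsum_sqTerm {f : ℝ × ℝ → ℝ} (hf : IntegrableOn f unitSq) {x : ℝ × ℝ}
    (hx : x ∈ unitSq) : sqFn f x = √(∑' k, sqTerm f k x) := by
  rw [sqFn, restrict_Icc_eq_restrict_unitSq]
  congr 1
  refine tsum_congr fun k => ?_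
  obtain ⟨ε, hε, h1⟩ := exists_haar1_eq k.1 hx.1
  obtain ⟨ε', hε', h2⟩ := exists_haar1_eq k.2 hx.2
  set J := ((k.1 : ℤ) - 1).toNat
  set J' := ((k.2 : ℤ) - 1).toNat
  have hmem : ∀ (j : ℕ) (y : ℝ), y ∈ Set.Ico (0 : ℝ) 1 →
      ∀ m ∈ Finset.range (2 ^ ((j : ℤ) - 1).toNat), m ≠ ⌊2 ^ ((j : ℤ) - 1).toNat * y⌋₊ →
      y ∉ dyadicI ((j : ℤ) - 1) m := by
    intro j y hy m hm hne hmem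
    rw [dyadicI_eq _ _ (Finset.mem_range.1 hm), mem_dyadicIco_iff_floor hy.1] at hmem
    exact hne hmem.symm
  have hmem' : ∀ (j : ℕ) (y : ℝ), y ∈ Set.Ico (0 : ℝ) 1 →
      y ∈ dyadicI ((j : ℤ) - 1) ⌊2 ^ ((j : ℤ) - 1).toNat * y⌋₊ := by
    intro j y hy
    rw [dyadicI_eq _ _ (floor_two_pow_mul_lt hy), mem_dyadicIco_iff_floor hy.1]
  rw [Finset.sum_eq_single_of_mem ⌊2 ^ J * x.1⌋₊
      (Finset.mem_range.2 (floor_two_pow_mul_lt hx.1)),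
    Finset.sum_eq_single_of_mem ⌊2 ^ J' * x.2⌋₊
      (Finset.mem_range.2 (floor_two_pow_mul_lt hx.2)),
    Set.indicator_of_mem (Set.mk_mem_prod (hmem' _ _ hx.1) (hmem' _ _ hx.2)), mul_one, sqTerm,
    martDiff_dyadicCoeff hf]
  · have : ∀ t : ℝ × ℝ, f t * (martDiff dyadicKernel k.1 ⌊2 ^ k.1 * x.1⌋₊ t.1 *
        martDiff dyadicKernel k.2 ⌊2 ^ k.2 * x.2⌋₊ t.2) =
        (ε * ε' * 2 ^ (J + J')) * (f t * haar2 ((k.1 : ℤ) - 1, (k.2 : ℤ) - 1)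
          (⌊2 ^ J * x.1⌋₊, ⌊2 ^ J' * x.2⌋₊) t) := by
      intro t
      rw [haar2, pow_add]
      calc _ = f t * ((ε ^ 2 * martDiff dyadicKernel k.1 ⌊2 ^ k.1 * x.1⌋₊ t.1) *
            (ε' ^ 2 * martDiff dyadicKernel k.2 ⌊2 ^ k.2 * x.2⌋₊ t.2)) := by
            rw [hε, hε', one_mul, one_mul]
        _ = f t * ε * ε' * ((ε * martDiff dyadicKernel k.1 ⌊2 ^ k.1 * x.1⌋₊ t.1) *
            (ε' * martDiff dyadicKernel k.2 ⌊2 ^ k.2 * x.2⌋₊ t.2)) := by ring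
        _ = _ := by rw [← h1, ← h2]; ring
    simp only [this]
    rw [integral_const_mul, mul_pow, mul_pow, mul_pow, hε, hε', ← pow_mul, mul_comm (J + J') 2]
    ring
  · intro m hm hne
    rw [Set.indicator_of_notMem, mul_zero]
    exact fun h => hmem _ _ hx.2 m hm hne h.2
  · intro m hm hne
    refine Finset.sum_eq_zero fun m' _ => ?_
    rw [Set.indicator_of_notMem, mul_zero]
    exact fun h => hmem _ _ hx.1 m hm hne h.1

lemma sum_sqTerm_eq_dyadicSq₂ (f : ℝ × ℝ → ℝ) (n : ℕ) (x : ℝ × ℝ) :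
    ∑ k ∈ Finset.range (n + 1) ×ˢ Finset.range (n + 1), sqTerm f k x =
      dyadicSq₂ (dyadicCoeff f) n ⌊2 ^ n * x.1⌋₊ ⌊2 ^ n * x.2⌋₊ := by
  rw [Finset.sum_product, dyadicSq₂]
  refine Finset.sum_congr rfl fun k hk => Finset.sum_congr rfl fun l hl => ?_
  rw [Finset.mem_range] at hk hl
  rw [sqTerm, floor_two_pow_mul (show k ≤ n by omega), floor_two_pow_mul (show l ≤ n by omega)]

/-- The dyadic square of level `n` with index `(a, b)`. -/
def dyadicRect (n a b : ℕ) : Set (ℝ × ℝ) := dyadicIco n a ×ˢ dyadicIco n b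

lemma measurableSet_dyadicRect (n a b : ℕ) : MeasurableSet (dyadicRect n a b) :=
  measurableSet_Ico.prod measurableSet_Ico

lemma volume_dyadicRect (n a b : ℕ) :
    volume (dyadicRect n a b) = ENNReal.ofReal ((1 / 2 ^ n) * (1 / 2 ^ n)) := by
  rw [dyadicRect, Measure.volume_eq_prod, Measure.prod_prod, dyadicIco, dyadicIco,
    Real.volume_Ico, Real.volume_Ico, ← ENNReal.ofReal_mul' (by rw [← sub_div]; simp)]
  congr 1
  ring

lemma dyadicIco_subset {n a : ℕ} (ha : a < 2 ^ n) : dyadicIco n a ⊆ Set.Ico 0 1 := by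
  intro x hx
  rw [mem_dyadicIco_iff] at hx
  have h : (0 : ℝ) < 2 ^ n := by positivity
  have h1 : (a : ℝ) + 1 ≤ 2 ^ n := by exact_mod_cast ha
  have h0 : (0 : ℝ) ≤ a := by positivity
  constructor
  · by_contra! h'
    nlinarith
  · by_contra! h'
    nlinarith

lemma dyadicRect_subset {n a b : ℕ} (ha : a < 2 ^ n) (hb : b < 2 ^ n) :
    dyadicRect n a b ⊆ unitSq :=
  Set.prod_mono (dyadicIco_subset ha) (dyadicIco_subset hb)

lemma floor_eq_of_mem_dyadicRect {n a b : ℕ} {x : ℝ × ℝ} (ha : a < 2 ^ n) (hb : b < 2 ^ n)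
    (hx : x ∈ dyadicRect n a b) : ⌊2 ^ n * x.1⌋₊ = a ∧ ⌊2 ^ n * x.2⌋₊ = b :=
  ⟨(mem_dyadicIco_iff_floor (dyadicIco_subset ha hx.1).1).1 hx.1,
    (mem_dyadicIco_iff_floor (dyadicIco_subset hb hx.2).1).1 hx.2⟩

lemma mem_dyadicRect_floor (n : ℕ) {x : ℝ × ℝ} (hx : x ∈ unitSq) :
    x ∈ dyadicRect n ⌊2 ^ n * x.1⌋₊ ⌊2 ^ n * x.2⌋₊ :=
  ⟨(mem_dyadicIco_iff_floor hx.1.1).2 rfl, (mem_dyadicIco_iff_floor hx.2.1).2 rfl⟩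

lemma lintegral_unitSq_eq_sum (n : ℕ) (G : ℝ × ℝ → ENNReal) :
    ∫⁻ x in unitSq, G x = ∑ a ∈ Finset.range (2 ^ n), ∑ b ∈ Finset.range (2 ^ n),
      ∫⁻ x in dyadicRect n a b, G x := by
  have hU : unitSq = ⋃ c ∈ Finset.range (2 ^ n) ×ˢ Finset.range (2 ^ n),
      dyadicRect n c.1 c.2 := by
    refine Set.Subset.antisymm (fun x hx => ?_) (Set.iUnion₂_subset fun c hc => ?_)
    · refine Set.mem_biUnion (x := (⌊2 ^ n * x.1⌋₊, ⌊2 ^ n * x.2⌋₊)) ?_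
        (mem_dyadicRect_floor n hx)
      simpa using ⟨floor_two_pow_mul_lt hx.1, floor_two_pow_mul_lt hx.2⟩
    · rw [Finset.mem_product, Finset.mem_range, Finset.mem_range] at hc
      exact dyadicRect_subset hc.1 hc.2
  rw [hU, lintegral_biUnion_finset _ (fun c _ => measurableSet_dyadicRect n c.1 c.2),
    Finset.sum_product]
  intro c hc d hd hcd
  refine Set.disjoint_left.2 fun x hxc hxd => hcd ?_
  simp only [Finset.coe_product, Finset.coe_range, Set.mem_prod, Set.mem_Iio] at hc hd
  have h1 := floor_eq_of_mem_dyadicRect hc.1 hc.2 hxc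
  have h2 := floor_eq_of_mem_dyadicRect hd.1 hd.2 hxd
  exact Prod.ext (h1.1.symm.trans h2.1) (h1.2.symm.trans h2.2)

lemma lintegral_unitSq_floor (n : ℕ) (F : ℕ → ℕ → ℝ) (hF : ∀ a b, 0 ≤ F a b) :
    ∫⁻ x in unitSq, ENNReal.ofReal (F ⌊2 ^ n * x.1⌋₊ ⌊2 ^ n * x.2⌋₊) =
      ENNReal.ofReal (∑ a ∈ Finset.range (2 ^ n), ∑ b ∈ Finset.range (2 ^ n), F a b) *
        ENNReal.ofReal ((1 / 2 ^ n) * (1 / 2 ^ n)) := by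
  rw [lintegral_unitSq_eq_sum n,
    ENNReal.ofReal_sum_of_nonneg fun a _ => Finset.sum_nonneg fun b _ => hF a b,
    Finset.sum_mul]
  refine Finset.sum_congr rfl fun a ha => ?_
  rw [ENNReal.ofReal_sum_of_nonneg fun b _ => hF a b, Finset.sum_mul]
  refine Finset.sum_congr rfl fun b hb => ?_
  rw [← volume_dyadicRect n a b, ← setLIntegral_const]
  refine setLIntegral_congr_fun (measurableSet_dyadicRect n a b) fun x hx => ?_
  obtain ⟨h1, h2⟩ :=
    floor_eq_of_mem_dyadicRect (Finset.mem_range.1 ha) (Finset.mem_range.1 hb) hx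
  simp only [h1, h2]

lemma lintegral_unitSq_floor_le {n : ℕ} {F F' : ℕ → ℕ → ℝ} {K : ℝ} (hK : 0 ≤ K)
    (hF : ∀ a b, 0 ≤ F a b) (hF' : ∀ a b, 0 ≤ F' a b)
    (h : ∑ a ∈ Finset.range (2 ^ n), ∑ b ∈ Finset.range (2 ^ n), F a b ≤
      K * ∑ a ∈ Finset.range (2 ^ n), ∑ b ∈ Finset.range (2 ^ n), F' a b) :
    ∫⁻ x in unitSq, ENNReal.ofReal (F ⌊2 ^ n * x.1⌋₊ ⌊2 ^ n * x.2⌋₊) ≤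
      ENNReal.ofReal K *
        ∫⁻ x in unitSq, ENNReal.ofReal (F' ⌊2 ^ n * x.1⌋₊ ⌊2 ^ n * x.2⌋₊) := by
  rw [lintegral_unitSq_floor n F hF, lintegral_unitSq_floor n F' hF', ← mul_assoc,
    ← ENNReal.ofReal_mul hK]
  gcongr

lemma dyadicCoeff_eq_average (f : ℝ × ℝ → ℝ) {n a b : ℕ} (ha : a < 2 ^ n) (hb : b < 2 ^ n) :
    dyadicCoeff f n a n b = ⨍ t in dyadicRect n a b, f t := by
  have h : ∀ t : ℝ × ℝ, f t * (dyadicKernel n a t.1 * dyadicKernel n b t.2) =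
      (dyadicRect n a b).indicator (fun t => (2 ^ n * 2 ^ n) * f t) t := by
    classical
    intro t
    simp only [dyadicKernel, dyadicRect, Set.indicator_apply, Set.mem_prod]
    split_ifs <;> grind
  simp only [dyadicCoeff, h]
  rw [setIntegral_indicator (measurableSet_dyadicRect n a b),
    Set.inter_eq_self_of_subset_right (dyadicRect_subset ha hb), integral_const_mul,
    setAverage_eq, measureReal_def, volume_dyadicRect, ENNReal.toReal_ofReal (by positivity),
    smul_eq_mul]
  congr 1
  field_simp

lemma enorm_average_rpow_mul_le {α : Type*} [MeasurableSpace α] {μ : Measure α} {s : Set α}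
    {f : α → ℝ} {p : ℝ} (hp : 1 ≤ p) (hf : AEStronglyMeasurable f (μ.restrict s))
    (h0 : μ s ≠ 0) (ht : μ s ≠ ⊤) :
    ‖⨍ t in s, f t ∂μ‖ₑ ^ p * μ s ≤ ∫⁻ t in s, ‖f t‖ₑ ^ p ∂μ := by
  have hp0 : 0 < p := by linarith
  have : IsProbabilityMeasure ((μ s)⁻¹ • μ.restrict s) :=
    ⟨by simp [ENNReal.inv_mul_cancel h0 ht]⟩
  have h1 := eLpNorm_le_eLpNorm_of_exponent_le (μ := (μ s)⁻¹ • μ.restrict s) (f := f)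
    (p := 1) (q := ENNReal.ofReal p) (by simpa using hp) (hf.mono_ac
      Measure.smul_absolutelyContinuous)
  rw [eLpNorm_one_eq_lintegral_enorm, eLpNorm_eq_lintegral_rpow_enorm_toReal (by simpa using hp0)
    (by simp), ENNReal.toReal_ofReal hp0.le] at h1
  have h2 : ‖⨍ t in s, f t ∂μ‖ₑ ≤ ((μ s)⁻¹ • ∫⁻ t in s, ‖f t‖ₑ ^ p ∂μ) ^ (1 / p) := by
    rw [setAverage_eq', ← lintegral_smul_measure]
    exact (enorm_integral_le_lintegral_enorm f).trans h1
  calc _ ≤ (((μ s)⁻¹ • ∫⁻ t in s, ‖f t‖ₑ ^ p ∂μ) ^ (1 / p)) ^ p * μ s := by gcongr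
    _ = _ := by
      rw [← ENNReal.rpow_mul, one_div_mul_cancel hp0.ne', ENNReal.rpow_one, smul_eq_mul,
        mul_comm, ← mul_assoc, ENNReal.mul_inv_cancel h0 ht, one_mul]

lemma lintegral_dyadicCoeff_rpow_le {f : ℝ × ℝ → ℝ} (hf : IntegrableOn f unitSq) {p : ℝ}
    (hp : 1 ≤ p) (n : ℕ) :
    ∫⁻ x in unitSq, ENNReal.ofReal
        (|dyadicCoeff f n ⌊2 ^ n * x.1⌋₊ n ⌊2 ^ n * x.2⌋₊| ^ p) ≤
      ∫⁻ x in unitSq, ‖f x‖ₑ ^ p := by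
  rw [lintegral_unitSq_eq_sum n, lintegral_unitSq_eq_sum n]
  refine Finset.sum_le_sum fun a ha => Finset.sum_le_sum fun b hb => ?_
  rw [Finset.mem_range] at ha hb
  have hV : 0 < volume (dyadicRect n a b) := by
    rw [volume_dyadicRect, ENNReal.ofReal_pos]
    positivity
  refine le_trans (le_of_eq ?_) (enorm_average_rpow_mul_le hp
    (hf.mono_set (dyadicRect_subset ha hb)).aestronglyMeasurable hV.ne'
    (volume_dyadicRect n a b ▸ ENNReal.ofReal_ne_top))
  rw [← setLIntegral_const, ← dyadicCoeff_eq_average f ha hb]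
  refine setLIntegral_congr_fun (measurableSet_dyadicRect n a b) fun x hx => ?_
  obtain ⟨h1, h2⟩ := floor_eq_of_mem_dyadicRect ha hb hx
  simp only [h1, h2]
  rw [← ENNReal.ofReal_rpow_of_nonneg (abs_nonneg _) (by linarith), ← Real.norm_eq_abs,
    ofReal_norm]

lemma ae_tendsto_dyadicCoeff {f : ℝ × ℝ → ℝ} (hf : IntegrableOn f unitSq) :
    ∀ᵐ x ∂volume.restrict unitSq, Filter.Tendsto
      (fun n : ℕ => dyadicCoeff f n ⌊2 ^ n * x.1⌋₊ n ⌊2 ^ n * x.2⌋₊) Filter.atTop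
      (nhds (f x)) := by
  have hloc : LocallyIntegrable (unitSq.indicator f) :=
    (hf.integrable_indicator measurableSet_unitSq).locallyIntegrable
  rw [ae_restrict_iff' measurableSet_unitSq]
  filter_upwards [IsUnifLocDoublingMeasure.ae_tendsto_average volume hloc 1] with x hx hxU
  have hball : ∀ n a : ℕ, dyadicIco n a ⊆
        Metric.closedBall ((a + 1 / 2 : ℝ) / 2 ^ n) ((1 / 2) ^ (n + 1)) ∧
      dyadicIco n a =ᵐ[volume]
        Metric.closedBall ((a + 1 / 2 : ℝ) / 2 ^ n) ((1 / 2) ^ (n + 1)) := by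
    intro n a
    have h1 : (a + 1 / 2 : ℝ) / 2 ^ n - (1 / 2) ^ (n + 1) = a / 2 ^ n := by
      rw [one_div_pow, pow_succ]; field_simp; ring
    have h2 : (a + 1 / 2 : ℝ) / 2 ^ n + (1 / 2) ^ (n + 1) = (a + 1) / 2 ^ n := by
      rw [one_div_pow, pow_succ]; field_simp; ring
    rw [Real.closedBall_eq_Icc, h1, h2]
    exact ⟨Set.Ico_subset_Icc_self, Ico_ae_eq_Icc⟩
  have key := hx (l := Filter.atTop)
    (fun n : ℕ => ((⌊2 ^ n * x.1⌋₊ + 1 / 2 : ℝ) / 2 ^ n, (⌊2 ^ n * x.2⌋₊ + 1 / 2 : ℝ) / 2 ^ n))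
    (fun n : ℕ => (1 / 2 : ℝ) ^ (n + 1))
    (tendsto_nhdsWithin_iff.2 ⟨(tendsto_pow_atTop_nhds_zero_of_lt_one (by norm_num)
      (by norm_num)).comp (Filter.tendsto_add_atTop_nat 1),
      Filter.Eventually.of_forall fun n => by simp⟩)
    (Filter.Eventually.of_forall fun n => by
      rw [one_mul, ← closedBall_prod_same]
      have := mem_dyadicRect_floor n hxU
      exact ⟨(hball _ _).1 this.1, (hball _ _).1 this.2⟩)
  rw [Set.indicator_of_mem hxU] at key
  refine key.congr fun n => ?_
  have ha := floor_two_pow_mul_lt (n := n) hxU.1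
  have hb := floor_two_pow_mul_lt (n := n) hxU.2
  rw [dyadicCoeff_eq_average f ha hb, ← closedBall_prod_same]
  refine (setAverage_congr (Measure.set_prod_ae_eq (hball _ _).2 (hball _ _).2)).symm.trans ?_
  exact setAverage_congr_fun (measurableSet_dyadicRect n _ _)
    (Filter.Eventually.of_forall fun t ht =>
      Set.indicator_of_mem (dyadicRect_subset ha hb ht) f)

/-- The square of the dyadic square function, as an extended nonnegative real. -/
noncomputable def sqSum (f : ℝ × ℝ → ℝ) (x : ℝ × ℝ) : ENNReal :=
  ∑' k, ENNReal.ofReal (sqTerm f k x)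

lemma measurable_sqSum (f : ℝ × ℝ → ℝ) : Measurable (sqSum f) :=
  Measurable.tsum fun k => (measurable_sqTerm f k).ennreal_ofReal

lemma dyadicSq₂_eq_sum_ofReal (f : ℝ × ℝ → ℝ) (n : ℕ) (x : ℝ × ℝ) :
    ENNReal.ofReal (dyadicSq₂ (dyadicCoeff f) n ⌊2 ^ n * x.1⌋₊ ⌊2 ^ n * x.2⌋₊) =
      ∑ k ∈ Finset.range (n + 1) ×ˢ Finset.range (n + 1), ENNReal.ofReal (sqTerm f k x) := by
  rw [← sum_sqTerm_eq_dyadicSq₂, ENNReal.ofReal_sum_of_nonneg fun k _ => sqTerm_nonneg f k x]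

lemma tendsto_dyadicSq₂ (f : ℝ × ℝ → ℝ) (x : ℝ × ℝ) :
    Filter.Tendsto (fun n : ℕ => ENNReal.ofReal
        (dyadicSq₂ (dyadicCoeff f) n ⌊2 ^ n * x.1⌋₊ ⌊2 ^ n * x.2⌋₊))
      Filter.atTop (nhds (sqSum f x)) := by
  simp only [dyadicSq₂_eq_sum_ofReal]
  refine ENNReal.summable.hasSum.comp (Filter.tendsto_atTop_finset_of_monotone
    (f := fun n : ℕ => Finset.range (n + 1) ×ˢ Finset.range (n + 1)) ?_ fun k => ?_)
  · intro m n h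
    exact Finset.product_subset_product (Finset.range_mono (by omega))
      (Finset.range_mono (by omega))
  · exact ⟨k.1 + k.2, by simp⟩

lemma dyadicSq₂_le_sqSum (f : ℝ × ℝ → ℝ) (n : ℕ) (x : ℝ × ℝ) :
    ENNReal.ofReal (dyadicSq₂ (dyadicCoeff f) n ⌊2 ^ n * x.1⌋₊ ⌊2 ^ n * x.2⌋₊) ≤
      sqSum f x := by
  rw [dyadicSq₂_eq_sum_ofReal]
  exact ENNReal.sum_le_tsum _

/-- The two-parameter Littlewood–Paley inequality in terms of Lebesgue integrals. -/
lemma exists_lintegral_littlewoodPaley {p : ℝ} (hp : 1 < p) :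
    ∃ K : ℝ, 0 < K ∧ ∀ f : ℝ × ℝ → ℝ, IntegrableOn f unitSq →
      ∫⁻ x in unitSq, sqSum f x ^ (p / 2) ≤
        ENNReal.ofReal K * ∫⁻ x in unitSq, ‖f x‖ₑ ^ p ∧
      ∫⁻ x in unitSq, ‖f x‖ₑ ^ p ≤
        ENNReal.ofReal K * ∫⁻ x in unitSq, sqSum f x ^ (p / 2) := by
  obtain ⟨K, hK, h⟩ := exists_discrete_littlewoodPaley hp
  refine ⟨K, hK, fun f hf => ?_⟩
  have hp0 : 0 < p := by linarith
  have hsq : ∀ n a b, 0 ≤ dyadicSq₂ (dyadicCoeff f) n a b := fun n a b =>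
    Finset.sum_nonneg fun _ _ => Finset.sum_nonneg fun _ _ => sq_nonneg _
  have hfloor : ∀ (n : ℕ) (F : ℕ → ℕ → ENNReal),
      Measurable fun x : ℝ × ℝ => F ⌊2 ^ n * x.1⌋₊ ⌊2 ^ n * x.2⌋₊ := by
    intro n F
    have h1 : Measurable fun x : ℝ × ℝ => (⌊2 ^ n * x.1⌋₊, ⌊2 ^ n * x.2⌋₊) := by fun_prop
    exact (Measurable.of_discrete (f := fun c : ℕ × ℕ => F c.1 c.2)).comp h1
  have hdisc := fun n => h n (dyadicCoeff f) (isDyadicMartingale_dyadicCoeff hf n)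
    fun k a => isDyadicMartingale_dyadicCoeff_apply hf n k a
  constructor
  · calc ∫⁻ x in unitSq, sqSum f x ^ (p / 2)
        = ∫⁻ x in unitSq, Filter.liminf (fun n : ℕ => ENNReal.ofReal
            (dyadicSq₂ (dyadicCoeff f) n ⌊2 ^ n * x.1⌋₊ ⌊2 ^ n * x.2⌋₊ ^ (p / 2)))
            Filter.atTop := by
          refine lintegral_congr fun x => ?_
          simp only [← ENNReal.ofReal_rpow_of_nonneg (hsq _ _ _) (half_pos hp0).le]
          exact (((ENNReal.continuous_rpow_const (y := p / 2)).tendsto _).comp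
            (tendsto_dyadicSq₂ f x)).liminf_eq.symm
      _ ≤ _ := lintegral_liminf_le fun n => hfloor n fun a b =>
          ENNReal.ofReal (dyadicSq₂ (dyadicCoeff f) n a b ^ (p / 2))
      _ ≤ _ := Filter.liminf_le_of_frequently_le' (Filter.Frequently.of_forall fun n =>
          (lintegral_unitSq_floor_le hK.le
            (F := fun a b => dyadicSq₂ (dyadicCoeff f) n a b ^ (p / 2))
            (F' := fun a b => |dyadicCoeff f n a n b| ^ p)
            (fun a b => Real.rpow_nonneg (hsq n a b) _)
            (fun a b => Real.rpow_nonneg (abs_nonneg _) _) (hdisc n).1).trans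
            (mul_le_mul_right (lintegral_dyadicCoeff_rpow_le hf hp.le n) _))
  · calc ∫⁻ x in unitSq, ‖f x‖ₑ ^ p
        = ∫⁻ x in unitSq, Filter.liminf (fun n : ℕ => ENNReal.ofReal
            (|dyadicCoeff f n ⌊2 ^ n * x.1⌋₊ n ⌊2 ^ n * x.2⌋₊| ^ p)) Filter.atTop := by
          refine lintegral_congr_ae ?_
          filter_upwards [ae_tendsto_dyadicCoeff hf] with x hx
          simp only [← ENNReal.ofReal_rpow_of_nonneg (abs_nonneg _) hp0.le,
            ← Real.enorm_eq_ofReal_abs]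
          exact (((ENNReal.continuous_rpow_const (y := p)).tendsto _).comp
            hx.enorm).liminf_eq.symm
      _ ≤ _ := lintegral_liminf_le fun n => hfloor n fun a b =>
          ENNReal.ofReal (|dyadicCoeff f n a n b| ^ p)
      _ ≤ _ := Filter.liminf_le_of_frequently_le' (Filter.Frequently.of_forall fun n =>
          (lintegral_unitSq_floor_le hK.le
            (F := fun a b => |dyadicCoeff f n a n b| ^ p)
            (F' := fun a b => dyadicSq₂ (dyadicCoeff f) n a b ^ (p / 2))
            (fun a b => Real.rpow_nonneg (abs_nonneg _) _)
            (fun a b => Real.rpow_nonneg (hsq n a b) _) (hdisc n).2).trans (by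
              gcongr with x
              rw [← ENNReal.ofReal_rpow_of_nonneg (hsq _ _ _) (half_pos hp0).le]
              gcongr
              exact dyadicSq₂_le_sqSum f n x))

lemma sqFn_rpow_eq_toReal {f : ℝ × ℝ → ℝ} (hf : IntegrableOn f unitSq) {x : ℝ × ℝ}
    (hx : x ∈ unitSq) (p : ℝ) :
    sqFn f x ^ p = (sqSum f x ^ (p / 2)).toReal := by
  have h : ∑' k, sqTerm f k x = (sqSum f x).toReal := by
    rw [sqSum, ENNReal.tsum_toReal_eq fun k => ENNReal.ofReal_ne_top]
    simp only [ENNReal.toReal_ofReal (sqTerm_nonneg f _ x)]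
  rw [sqFn_eq_sqrt_tsum_sqTerm hf hx, h, Real.sqrt_eq_rpow,
    ← Real.rpow_mul ENNReal.toReal_nonneg, ENNReal.toReal_rpow, one_div_mul_eq_div]

/-- Dyadic Littlewood–Paley inequality on the unit square:
`c_p ‖f‖_{L_p} ≤ ‖S(f)‖_{L_p} ≤ C_p ‖f‖_{L_p}` for all `f ∈ L_p([0,1)²)`. -/
theorem statement11 (p : ℝ) (hp : 1 < p) :
    ∃ c C : ℝ, 0 < c ∧ c ≤ C ∧ ∀ f : ℝ × ℝ → ℝ,
      MemLp f (ENNReal.ofReal p) (volume.restrict (Set.Icc (0 : ℝ × ℝ) 1)) →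
      c * (∫ t in Set.Icc (0 : ℝ × ℝ) 1, |f t| ^ p) ^ (1 / p) ≤
          (∫ t in Set.Icc (0 : ℝ × ℝ) 1, sqFn f t ^ p) ^ (1 / p) ∧
      (∫ t in Set.Icc (0 : ℝ × ℝ) 1, sqFn f t ^ p) ^ (1 / p) ≤
          C * (∫ t in Set.Icc (0 : ℝ × ℝ) 1, |f t| ^ p) ^ (1 / p) := by
  obtain ⟨K, hK, h⟩ := exists_lintegral_littlewoodPaley hp
  have hp0 : 0 < p := by linarith
  have hKp : 0 < K ^ (1 / p) := by positivity
  refine ⟨min (K ^ (1 / p))⁻¹ (K ^ (1 / p)), K ^ (1 / p), by positivity, min_le_right _ _,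
    fun f hf => ?_⟩
  rw [restrict_Icc_eq_restrict_unitSq] at hf ⊢
  have hvol : volume unitSq ≠ ⊤ := by
    rw [unitSq, Measure.volume_eq_prod, Measure.prod_prod]
    simp
  have : IsFiniteMeasure (volume.restrict unitSq) := isFiniteMeasure_restrict.2 hvol
  have hint : IntegrableOn f unitSq := hf.integrable (by simpa using hp.le)
  have hfin : ∫⁻ x in unitSq, ‖f x‖ₑ ^ p < ⊤ := by
    have := (eLpNorm_lt_top_iff_lintegral_rpow_enorm_lt_top (by simpa using hp0) (by simp)).1 hf.2
    rwa [ENNReal.toReal_ofReal hp0.le] at this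
  obtain ⟨h1, h2⟩ := h f hint
  have hfin' : ∫⁻ x in unitSq, sqSum f x ^ (p / 2) < ⊤ :=
    h1.trans_lt (ENNReal.mul_lt_top ENNReal.ofReal_lt_top hfin)
  have hmeas : Measurable fun x => sqSum f x ^ (p / 2) := (measurable_sqSum f).pow_const _
  have hS : ∫ x in unitSq, sqFn f x ^ p = (∫⁻ x in unitSq, sqSum f x ^ (p / 2)).toReal := by
    rw [← integral_toReal hmeas.aemeasurable (ae_lt_top hmeas hfin'.ne)]
    refine integral_congr_ae ?_
    filter_upwards [ae_restrict_mem measurableSet_unitSq] with x hx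
    exact sqFn_rpow_eq_toReal hint hx p
  have hF : ∫ x in unitSq, |f x| ^ p = (∫⁻ x in unitSq, ‖f x‖ₑ ^ p).toReal := by
    rw [← integral_toReal (hint.aestronglyMeasurable.enorm.pow_const _)
      (Filter.Eventually.of_forall fun x => by
        exact ENNReal.rpow_lt_top_of_nonneg hp0.le enorm_ne_top)]
    refine integral_congr_ae (Filter.Eventually.of_forall fun x => ?_)
    simp [← ENNReal.toReal_rpow]
  rw [hS, hF]
  set S := ∫⁻ x in unitSq, sqSum f x ^ (p / 2)
  set F := ∫⁻ x in unitSq, ‖f x‖ₑ ^ p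
  have key : ∀ {X Y : ENNReal}, Y ≠ ⊤ → X ≤ ENNReal.ofReal K * Y →
      X.toReal ^ (1 / p) ≤ K ^ (1 / p) * Y.toReal ^ (1 / p) := by
    intro X Y hY hXY
    rw [← Real.mul_rpow hK.le ENNReal.toReal_nonneg]
    refine Real.rpow_le_rpow ENNReal.toReal_nonneg ?_ (by positivity)
    have := ENNReal.toReal_mono (ENNReal.mul_ne_top ENNReal.ofReal_ne_top hY) hXY
    rwa [ENNReal.toReal_mul, ENNReal.toReal_ofReal hK.le] at this
  refine ⟨?_, key hfin.ne h1⟩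
  calc _ ≤ (K ^ (1 / p))⁻¹ * F.toReal ^ (1 / p) := by
        gcongr
        exact min_le_left _ _
    _ ≤ _ := (inv_mul_le_iff₀ hKp).2 (key hfin'.ne h2)
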